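/- (Theorem 2.3, case 2, positive half-line.) Let σ > 0, c > 0 and K > 0, and set h(y) = K·y + c (so h(y) ≥ c > 0 for y ≥ 0). Define F(y) = G(y, σ·h(y)) = (1/√(2π(σ(Ky+c))²)) ∫_{−∞}^{y} exp(−x²/(2(σ(Ky+c))²)) dx. Then F is strictly increasing on [0, ∞). -/

import Mathlib

/-- The CDF at `y` of a centered normal distribution with standard deviation `s`. -/
noncomputable def gaussCDF (y s : ℝ) : ℝ :=
  (Real.sqrt (2 * Real.pi * s ^ 2))⁻¹ * ∫ x in Set.Iic y, Real.exp (-x ^ 2 / (2 * s ^ 2))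

/-! Scaling a centered normal variable to variance one gives `G(y, s) = Φ(y / s)` for `s > 0`, where
`Φ` is the standard normal CDF. Since `Φ` is strictly increasing, `y ↦ G(y, h(y))` is strictly
increasing as soon as `y ↦ y / h(y)` is; for affine `h(y) = K y + c` the latter has derivative
`c / h(y) ^ 2 > 0`, whatever the sign of `K`. -/

open MeasureTheory ProbabilityTheory Set

theorem strictMono_cdf (μ : Measure ℝ) [IsProbabilityMeasure μ] [μ.IsOpenPosMeasure] :
    StrictMono (cdf μ) := by
  intro a b hab
  have hIoc : 0 < μ.real (Ioc a b) :=
    ENNReal.toReal_pos ((Measure.measure_Ioo_pos μ).2 hab |>.trans_le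
      (measure_mono Ioo_subset_Ioc_self)).ne' (measure_ne_top μ _)
  have hIic : μ.real (Iic b) = μ.real (Iic a) + μ.real (Ioc a b) := by
    rw [← Iic_union_Ioc_eq_Iic hab.le,
      measureReal_union (Iic_disjoint_Ioc le_rfl) measurableSet_Ioc]
  rw [cdf_eq_real, cdf_eq_real, hIic]
  exact lt_add_of_pos_right _ hIoc

theorem cdf_map_const_mul (μ : Measure ℝ) [IsProbabilityMeasure μ] {s : ℝ} (hs : 0 < s) (y : ℝ) :
    cdf (μ.map (s * ·)) y = cdf μ (y / s) := by
  have hmeas : Measurable (s * · : ℝ → ℝ) := measurable_const_mul s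
  have : IsProbabilityMeasure (μ.map (s * ·)) := Measure.isProbabilityMeasure_map hmeas.aemeasurable
  rw [cdf_eq_real, cdf_eq_real, map_measureReal_apply hmeas measurableSet_Iic,
    preimage_const_mul_Iic₀ y hs]

theorem isOpenPosMeasure_gaussianReal (m : ℝ) {v : NNReal} (hv : v ≠ 0) :
    (gaussianReal m v).IsOpenPosMeasure :=
  (gaussianReal_absolutelyContinuous' m hv).isOpenPosMeasure

theorem cdf_gaussianReal_eq_integral (m : ℝ) {v : NNReal} (hv : v ≠ 0) (y : ℝ) :
    cdf (gaussianReal m v) y = ∫ x in Iic y, gaussianPDFReal m v x := by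
  rw [cdf_eq_real, measureReal_def, gaussianReal_apply_eq_integral m hv,
    ENNReal.toReal_ofReal (integral_nonneg (gaussianPDFReal_nonneg m v))]

theorem gaussCDF_eq_cdf_gaussianReal (y : ℝ) {s : ℝ} (hs : s ≠ 0) :
    gaussCDF y s = cdf (gaussianReal 0 (.mk (s ^ 2) (sq_nonneg s))) y := by
  have hv : NNReal.mk (s ^ 2) (sq_nonneg s) ≠ 0 := fun h ↦
    hs (pow_eq_zero_iff two_ne_zero |>.1 (congrArg NNReal.toReal h))
  simp only [cdf_gaussianReal_eq_integral 0 hv, gaussianPDFReal_def, NNReal.coe_mk, sub_zero,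
    integral_const_mul, gaussCDF]

theorem gaussCDF_eq_cdf_div (y : ℝ) {s : ℝ} (hs : 0 < s) :
    gaussCDF y s = cdf (gaussianReal 0 1) (y / s) := by
  rw [gaussCDF_eq_cdf_gaussianReal y hs.ne', ← cdf_map_const_mul _ hs, gaussianReal_map_const_mul,
    mul_zero, mul_one]

theorem gaussCDF_lt_gaussCDF_iff {y₁ y₂ s₁ s₂ : ℝ} (hs₁ : 0 < s₁) (hs₂ : 0 < s₂) :
    gaussCDF y₁ s₁ < gaussCDF y₂ s₂ ↔ y₁ / s₁ < y₂ / s₂ := by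
  have := isOpenPosMeasure_gaussianReal 0 one_ne_zero
  rw [gaussCDF_eq_cdf_div y₁ hs₁, gaussCDF_eq_cdf_div y₂ hs₂, (strictMono_cdf _).lt_iff_lt]

theorem strictMonoOn_gaussCDF {h : ℝ → ℝ} {t : Set ℝ} (hpos : ∀ y ∈ t, 0 < h y)
    (hdiv : StrictMonoOn (fun y ↦ y / h y) t) : StrictMonoOn (fun y ↦ gaussCDF y (h y)) t :=
  fun a ha b hb hab ↦ (gaussCDF_lt_gaussCDF_iff (hpos a ha) (hpos b hb)).2 (hdiv ha hb hab)

theorem strictMonoOn_div_affine {𝕜 : Type*} [Field 𝕜] [LinearOrder 𝕜] [IsStrictOrderedRing 𝕜]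
    (K : 𝕜) {c : 𝕜} (hc : 0 < c) :
    StrictMonoOn (fun y ↦ y / (K * y + c)) {y | 0 < K * y + c} := by
  intro a ha b hb hab
  rw [div_lt_div_iff₀ ha hb]
  calc a * (K * b + c) = K * a * b + c * a := by ring
    _ < K * a * b + c * b := by gcongr
    _ = b * (K * a + c) := by ring

theorem random_limit_normal_stmt9_general
    (σ c K : ℝ) (hσ : 0 < σ) (hc : 0 < c)
    (F : ℝ → ℝ) (hF : ∀ y, F y = gaussCDF y (σ * (K * y + c))) :
    StrictMonoOn F {y | 0 < K * y + c} := by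
  obtain rfl : F = fun y ↦ gaussCDF y (σ * (K * y + c)) := funext hF
  refine strictMonoOn_gaussCDF (fun y hy ↦ mul_pos hσ hy) fun a ha b hb hab ↦ ?_
  simp only [mul_comm σ, ← div_div]
  exact div_lt_div_of_pos_right (strictMonoOn_div_affine K hc ha hb hab) hσ

/-- Theorem 2.3, case 2, positive half-line: for `σ > 0`, `c > 0`, `K > 0` and
`h(y) = K y + c`, the random limit normal function `F(y) = G(y, σ (K y + c))` is
strictly increasing on `[0, ∞)`. -/
theorem random_limit_normal_stmt9
    (σ c K : ℝ) (hσ : 0 < σ) (hc : 0 < c) (hK : 0 < K)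
    (F : ℝ → ℝ) (hF : ∀ y, F y = gaussCDF y (σ * (K * y + c))) :
    StrictMonoOn F (Set.Ici 0) :=
  (random_limit_normal_stmt9_general σ c K hσ hc F hF).mono fun _ hy ↦
    add_pos_of_nonneg_of_pos (mul_nonneg hK.le hy) hc
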